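/- Let n ≥ 2, 0 < α < n and 1 < s ≤ ∞, and suppose Ω satisfies the L^s-Dini condition D_s. Then there exist constants C > 0 and ϑ ∈ (0, 1/2) such that for every R > 0 and every x ∈ ℝ^n with |x| < ϑR, (∫_{R ≤ |z| < 2R} | Ω(z−x)/|z−x|^{n−α} − Ω(z)/|z|^{n−α} |^s dz)^{1/s} ≤ C R^{n/s − (n−α)} ( |x|/R + ∫_{|x|/(2R)}^{|x|/R} ω_s(δ)/δ dδ ), where C is independent of R and x (for s = ∞ the left-hand side is the essential supremum over R ≤ |z| < 2R and n/s = 0). -/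

import Mathlib

noncomputable section

open MeasureTheory Metric Set
open scoped ENNReal

abbrev En (n : ℕ) : Type := EuclideanSpace ℝ (Fin n)

/-- `Ω` is homogeneous of degree zero. -/
def HomZero {n : ℕ} (Ω : En n → ℝ) : Prop :=
  ∀ t : ℝ, 0 < t → ∀ x : En n, x ≠ 0 → Ω (t • x) = Ω x

/-- Surface measure on the unit sphere `S^{n-1}`. -/
noncomputable def sphereMeasure (n : ℕ) : Measure (sphere (0 : En n) 1) :=
  (volume : Measure (En n)).toSphere

/-- The `L^s(S^{n-1})` norm of `Ω` (essential supremum when `s = ∞`). -/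
noncomputable def sphereLpNorm {n : ℕ} (s : ℝ≥0∞) (Ω : En n → ℝ) : ℝ≥0∞ :=
  eLpNorm (fun x : sphere (0 : En n) 1 => Ω (x : En n)) s (sphereMeasure n)

/-- `‖ρ - I‖ = sup_{x' ∈ S^{n-1}} |ρ x' - x'|`. -/
noncomputable def rotNorm {n : ℕ} (ρ : En n ≃ₗᵢ[ℝ] En n) : ℝ :=
  ⨆ x : sphere (0 : En n) 1, ‖ρ (x : En n) - (x : En n)‖

/-- `ρ ∈ SO(n)`: a linear isometry with determinant one. -/
def IsRotation {n : ℕ} (ρ : En n ≃ₗᵢ[ℝ] En n) : Prop :=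
  LinearMap.det (ρ.toLinearEquiv : En n →ₗ[ℝ] En n) = 1

/-- The integral modulus of continuity `ω_s(δ)` of `Ω` of order `s`
(essential-sup version when `s = ∞`). -/
noncomputable def modCont {n : ℕ} (s : ℝ≥0∞) (Ω : En n → ℝ) (δ : ℝ) : ℝ :=
  (⨆ ρ : {ρ : En n ≃ₗᵢ[ℝ] En n // IsRotation ρ ∧ rotNorm ρ < δ},
    eLpNorm (fun x : sphere (0 : En n) 1 => Ω (ρ.1 (x : En n)) - Ω (x : En n)) s
      (sphereMeasure n)).toReal

/-- The `L^{s;β}`-Dini smoothness condition `D_{s;β}`. -/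
def DiniCond {n : ℕ} (s : ℝ≥0∞) (β : ℝ) (Ω : En n → ℝ) : Prop :=
  HomZero Ω ∧ sphereLpNorm s Ω ≠ ⊤ ∧
    IntegrableOn (fun δ : ℝ => modCont s Ω δ / δ ^ (1 + β)) (Ioo (0 : ℝ) 1)

/-- The homogeneous fractional integral operator `T_{Ω,α}`. -/
noncomputable def T {n : ℕ} (Ω : En n → ℝ) (α : ℝ) (f : En n → ℝ) (x : En n) : ℝ :=
  ∫ y, Ω (x - y) * ‖x - y‖ ^ (α - (n : ℝ)) * f y

/-- Conjugate exponent of `s ∈ (1,∞]`, with `∞' = 1`. -/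
noncomputable def conj (s : ℝ≥0∞) : ℝ := if s = ⊤ then 1 else s.toReal / (s.toReal - 1)

/-- Conjugate exponent of a real exponent `t`. -/
noncomputable def rconj (t : ℝ) : ℝ := t / (t - 1)

/-- A weight: a locally integrable a.e. positive function. -/
def IsWeight {n : ℕ} (ω : En n → ℝ) : Prop :=
  LocallyIntegrable ω volume ∧ ∀ᵐ x : En n, 0 < ω x

/-- The Muckenhoupt–Wheeden class `A(t, ∞)`. -/
def MemArInfty {n : ℕ} (ω : En n → ℝ) (t : ℝ) : Prop :=
  ∃ C > 0, ∀ (x₀ : En n) (r : ℝ), 0 < r →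
    essSup ω (volume.restrict (ball x₀ r)) *
      (⨍ x in ball x₀ r, ω x ^ (-(rconj t))) ^ (1 / rconj t) ≤ C

/-- The Muckenhoupt–Wheeden class `A(u, t)` (with the `ess sup` convention when `u = 1`). -/
def MemArt {n : ℕ} (ω : En n → ℝ) (u t : ℝ) : Prop :=
  ∃ C > 0, ∀ (x₀ : En n) (r : ℝ), 0 < r →
    (⨍ x in ball x₀ r, ω x ^ t) ^ (1 / t) *
      (if u = 1 then essSup (fun x => (ω x)⁻¹) (volume.restrict (ball x₀ r))
       else (⨍ x in ball x₀ r, ω x ^ (-(rconj u))) ^ (1 / rconj u)) ≤ C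

/-- The weighted Lebesgue norm `‖f‖_{L^p(ω^p)}`. -/
noncomputable def wLpNorm {n : ℕ} (p : ℝ) (ω f : En n → ℝ) : ℝ :=
  (∫ x, |f x| ^ p * ω x ^ p) ^ (1 / p)

/-- `f ∈ L^p(ω^p)`. -/
def MemWLp {n : ℕ} (p : ℝ) (ω f : En n → ℝ) : Prop :=
  Measurable f ∧ Integrable (fun x => |f x| ^ p * ω x ^ p)

/-- The set of ball quantities defining the weighted Morrey norm `M^{p,κ}(ω₁, ν)`. -/
def morreySet {n : ℕ} (p κ : ℝ) (ω₁ ν f : En n → ℝ) : Set ℝ :=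
  {c | ∃ (x₀ : En n) (r : ℝ), 0 < r ∧
    c = ((∫ x in ball x₀ r, ν x) ^ (-κ) * ∫ x in ball x₀ r, |f x| ^ p * ω₁ x) ^ (1 / p)}

/-- The weighted Morrey norm `‖f‖_{M^{p,κ}(ω₁, ν)}`. -/
noncomputable def morreyNorm {n : ℕ} (p κ : ℝ) (ω₁ ν f : En n → ℝ) : ℝ :=
  sSup (morreySet p κ ω₁ ν f)

/-- `f ∈ M^{p,κ}(ω₁, ν)`, i.e. `‖f‖_{M^{p,κ}(ω₁,ν)} < ∞`. -/
def MemMorrey {n : ℕ} (p κ : ℝ) (ω₁ ν f : En n → ℝ) : Prop :=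
  Measurable f ∧
  (∀ (x₀ : En n) (r : ℝ), 0 < r → IntegrableOn (fun x => |f x| ^ p * ω₁ x) (ball x₀ r)) ∧
  BddAbove (morreySet p κ ω₁ ν f)

open Measure
open scoped Pointwise

theorem sphereMeasure_preimage {n : ℕ} {S : Set (En n)} (hS : MeasurableSet S) :
    sphereMeasure n (Subtype.val ⁻¹' S) =
      n * volume {v : En n | v ≠ 0 ∧ ‖v‖ < 1 ∧ ‖v‖⁻¹ • v ∈ S} := by
  rw [sphereMeasure, toSphere_apply' _ (measurable_subtype_coe hS), finrank_euclideanSpace_fin]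
  congr 2
  ext v
  simp only [mem_smul, mem_Ioo, mem_image, mem_preimage, Subtype.exists, exists_and_right,
    mem_ofPred_eq]
  constructor
  · rintro ⟨t, ⟨ht0, ht1⟩, ζ, ⟨y, ⟨hy, hyS⟩, rfl⟩, rfl⟩
    have hy1 : ‖y‖ = 1 := by simpa using hy
    have hn : ‖t • y‖ = t := by rw [norm_smul, hy1, mul_one, Real.norm_of_nonneg ht0.le]
    refine ⟨?_, ?_, ?_⟩
    · rw [← norm_ne_zero_iff, hn]; exact ht0.ne'
    · rw [hn]; exact ht1
    · rw [hn, smul_smul, inv_mul_cancel₀ ht0.ne', one_smul]; exact hyS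
  · rintro ⟨h0, h1, h2⟩
    have hv : 0 < ‖v‖ := norm_pos_iff.2 h0
    refine ⟨‖v‖, ⟨hv, h1⟩, ‖v‖⁻¹ • v, ⟨‖v‖⁻¹ • v, ⟨?_, h2⟩, rfl⟩, ?_⟩
    · simp [norm_smul, hv.ne']
    · rw [smul_smul, mul_inv_cancel₀ hv.ne', one_smul]

/-- The action of a linear isometry on the unit sphere. -/
def sphereMap {n : ℕ} (ρ : En n ≃ₗᵢ[ℝ] En n) (ζ : sphere (0 : En n) 1) : sphere (0 : En n) 1 :=
  ⟨ρ ζ, by simp⟩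

theorem measurePreserving_sphereMap {n : ℕ} (ρ : En n ≃ₗᵢ[ℝ] En n) :
    MeasurePreserving (sphereMap ρ) (sphereMeasure n) (sphereMeasure n) := by
  have hm : Measurable (sphereMap ρ) :=
    (ρ.continuous.measurable.comp measurable_subtype_coe).subtype_mk
  refine ⟨hm, ?_⟩
  ext A hA
  obtain ⟨S, hS, rfl⟩ := hA
  rw [map_apply hm (measurable_subtype_coe hS)]
  have : sphereMap ρ ⁻¹' (Subtype.val ⁻¹' S) = Subtype.val ⁻¹' (ρ ⁻¹' S) := rfl
  rw [this, sphereMeasure_preimage hS, sphereMeasure_preimage (ρ.continuous.measurable hS)]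
  congr 1
  refine Eq.trans ?_ (ρ.measurePreserving.measure_preimage_equiv
    (f := ρ.toHomeomorph.toMeasurableEquiv) _)
  congr 1
  ext v
  simp

instance {n : ℕ} : IsFiniteMeasure (sphereMeasure n) := by
  unfold sphereMeasure; infer_instance

theorem map_normalize_le {n : ℕ} (hn : n ≠ 0) {K : ℝ} (hK : 0 < K) {A : Set (En n)}
    (hA : ∀ z ∈ A, z ≠ 0 ∧ ‖z‖ < K) {S : Set (En n)} (hS : MeasurableSet S) :
    volume (A ∩ {z | ‖z‖⁻¹ • z ∈ S}) ≤
      ENNReal.ofReal (K ^ n) * sphereMeasure n (Subtype.val ⁻¹' S) := by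
  rw [sphereMeasure_preimage hS]
  calc volume (A ∩ {z | ‖z‖⁻¹ • z ∈ S})
      ≤ volume (K • {v : En n | v ≠ 0 ∧ ‖v‖ < 1 ∧ ‖v‖⁻¹ • v ∈ S}) := by
        refine measure_mono ?_
        rintro z ⟨hz, hzS⟩
        obtain ⟨h0, h1⟩ := hA z hz
        rw [mem_smul_set_iff_inv_smul_mem₀ hK.ne']
        refine ⟨by simp [hK.ne', h0], ?_, ?_⟩
        · rw [norm_smul, norm_inv, Real.norm_of_nonneg hK.le, inv_mul_lt_iff₀ hK, mul_one]
          exact h1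
        · rw [norm_smul, norm_inv, Real.norm_of_nonneg hK.le, smul_smul]
          rw [show (K⁻¹ * ‖z‖)⁻¹ * K⁻¹ = ‖z‖⁻¹ by field_simp]
          exact hzS
    _ = ENNReal.ofReal (K ^ n) * volume {v : En n | v ≠ 0 ∧ ‖v‖ < 1 ∧ ‖v‖⁻¹ • v ∈ S} := by
        rw [addHaar_smul, finrank_euclideanSpace_fin, abs_of_pos (by positivity)]
    _ ≤ _ := by
        gcongr
        have : (1 : ℝ≥0∞) ≤ n := by exact_mod_cast Nat.one_le_iff_ne_zero.2 hn
        exact le_mul_of_one_le_left zero_le this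

theorem sphereMeasure_cap_ge {n : ℕ} {z : En n} (hz : z ≠ 0) :
    n * volume (ball (0 : En n) (1 / 8)) ≤
      sphereMeasure n {ζ | ‖z‖ / 2 ≤ inner ℝ (ζ : En n) z} := by
  have hS : MeasurableSet {v : En n | ‖z‖ / 2 ≤ inner ℝ v z} :=
    measurableSet_le measurable_const (by fun_prop)
  have hz' : 0 < ‖z‖ := norm_pos_iff.2 hz
  have := sphereMeasure_preimage hS
  rw [show {ζ : sphere (0 : En n) 1 | ‖z‖ / 2 ≤ inner ℝ (ζ : En n) z} =
    Subtype.val ⁻¹' {v : En n | ‖z‖ / 2 ≤ inner ℝ v z} from rfl, this]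
  refine mul_le_mul' le_rfl ?_
  set e := (2 * ‖z‖)⁻¹ • z with he
  have hen : ‖e‖ = 1 / 2 := by
    rw [he, norm_smul, Real.norm_of_nonneg (by positivity)]; field_simp
  rw [← addHaar_ball_center volume e]
  refine measure_mono fun v hv => ?_
  rw [mem_ball, dist_eq_norm] at hv
  have h1 : ‖v‖ ≤ ‖v - e‖ + ‖e‖ := by simpa using norm_add_le (v - e) e
  have h2 : ‖e‖ ≤ ‖v - e‖ + ‖v‖ := by
    simpa [norm_sub_rev] using norm_add_le (e - v) v
  have hv0 : 0 < ‖v‖ := by linarith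
  refine ⟨norm_pos_iff.1 hv0, by linarith, ?_⟩
  have h3 : inner ℝ v z = 2 * ‖z‖ * inner ℝ v e := by
    rw [he, inner_smul_right]; field_simp
  have h4 : inner ℝ v e = inner ℝ (v - e) e + 1 / 4 := by
    rw [inner_sub_left, real_inner_self_eq_norm_sq, hen]; ring
  have h5 := (abs_le.1 (abs_real_inner_le_norm (v - e) e)).1
  rw [hen] at h5
  simp only [mem_ofPred_eq, inner_smul_left, h3]
  simp only [conj_trivial]
  rw [inv_mul_eq_div, le_div_iff₀ hv0]
  nlinarith

/-- Reflection in the line spanned by `m`. -/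
def lineReflection {n : ℕ} (m : En n) : En n ≃ₗᵢ[ℝ] En n := (ℝ ∙ m).reflection

theorem lineReflection_apply {n : ℕ} (m v : En n) :
    lineReflection m v = (2 : ℝ) • (inner ℝ m v / ‖m‖ ^ 2) • m - v := by
  rw [lineReflection, Submodule.reflection_singleton_apply]
  simp [two_smul]

theorem lineReflection_lineReflection {n : ℕ} (m v : En n) :
    lineReflection m (lineReflection m v) = v :=
  Submodule.reflection_reflection _ _

@[fun_prop]
theorem Measurable.lineReflection {n : ℕ} {β : Type*} [MeasurableSpace β] {f g : β → En n}
    (hf : Measurable f) (hg : Measurable g) : Measurable fun b => lineReflection (f b) (g b) := by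
  simp only [lineReflection_apply]
  fun_prop

theorem norm_normalize_sub_normalize_le {n : ℕ} {m p : En n} (hm : m ≠ 0) (hp : p ≠ 0) :
    ‖‖m‖⁻¹ • m - ‖p‖⁻¹ • p‖ ≤ 2 * ‖m - p‖ / ‖p‖ := by
  have hm' : 0 < ‖m‖ := norm_pos_iff.2 hm
  have hp' : 0 < ‖p‖ := norm_pos_iff.2 hp
  have h : ‖m‖⁻¹ • m - ‖p‖⁻¹ • p = ‖p‖⁻¹ • ((m - p) + (‖p‖ - ‖m‖) • (‖m‖⁻¹ • m)) := by
    rw [smul_add, smul_sub, sub_smul, smul_sub, smul_smul, smul_smul, smul_smul, smul_smul,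
      inv_mul_cancel₀ hp'.ne', one_mul, mul_inv_cancel_right₀ hm'.ne']
    abel
  have h1 : ‖‖m‖⁻¹ • m‖ = 1 := by simp [norm_smul, hm'.ne']
  rw [h, norm_smul, norm_inv, norm_norm, inv_mul_eq_div]
  gcongr
  refine (norm_add_le _ _).trans ?_
  rw [norm_smul, h1, mul_one, Real.norm_eq_abs]
  have := abs_norm_sub_norm_le p m
  rw [norm_sub_rev p m] at this
  linarith

theorem norm_lineReflection_sub_le {n : ℕ} {m p : En n} (hm : m ≠ 0) (hp : p ≠ 0) (v : En n) :
    ‖lineReflection m v - lineReflection p v‖ ≤ 8 * ‖m - p‖ / ‖p‖ * ‖v‖ := by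
  have key : ∀ {q : En n}, q ≠ 0 →
      lineReflection q v = (2 : ℝ) • inner ℝ (‖q‖⁻¹ • q) v • (‖q‖⁻¹ • q) - v := by
    intro q hq
    have : ‖q‖ ≠ 0 := norm_ne_zero_iff.2 hq
    rw [lineReflection_apply, inner_smul_left, conj_trivial, smul_smul, smul_smul, smul_smul]
    congr 2
    field_simp
  have hab := norm_normalize_sub_normalize_le hm hp
  have ha : ‖‖m‖⁻¹ • m‖ = 1 := by simp [norm_smul, hm]
  have hb : ‖‖p‖⁻¹ • p‖ = 1 := by simp [norm_smul, hp]
  rw [key hm, key hp]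
  set a := ‖m‖⁻¹ • m
  set b := ‖p‖⁻¹ • p
  have h : ((2 : ℝ) • inner ℝ a v • a - v) - ((2 : ℝ) • inner ℝ b v • b - v) =
      (2 : ℝ) • (inner ℝ (a - b) v • a + inner ℝ b v • (a - b)) := by
    rw [inner_sub_left, sub_smul, smul_sub (inner ℝ b v)]
    module
  have h1 : ‖inner ℝ (a - b) v • a‖ ≤ ‖a - b‖ * ‖v‖ := by
    rw [norm_smul, ha, mul_one]; exact norm_inner_le_norm _ _
  have h2 : ‖inner ℝ b v • (a - b)‖ ≤ ‖a - b‖ * ‖v‖ := by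
    rw [norm_smul, mul_comm]
    gcongr
    simpa [hb] using norm_inner_le_norm (𝕜 := ℝ) b v
  rw [h, norm_smul, Real.norm_two]
  calc 2 * ‖inner ℝ (a - b) v • a + inner ℝ b v • (a - b)‖
      ≤ 2 * (‖a - b‖ * ‖v‖ + ‖a - b‖ * ‖v‖) := by
        gcongr; exact (norm_add_le _ _).trans (add_le_add h1 h2)
    _ = 4 * ‖a - b‖ * ‖v‖ := by ring
    _ ≤ 4 * (2 * ‖m - p‖ / ‖p‖) * ‖v‖ := by gcongr
    _ = _ := by ring

theorem finrank_orthogonal_line {n : ℕ} {m : En n} (hm : m ≠ 0) :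
    Module.finrank ℝ (ℝ ∙ m)ᗮ = n - 1 := by
  have h := Submodule.finrank_add_finrank_orthogonal (ℝ ∙ m)
  rw [finrank_span_singleton hm, finrank_euclideanSpace_fin] at h
  omega

theorem isRotation_lineReflection_trans {n : ℕ} {m p : En n} (hm : m ≠ 0) (hp : p ≠ 0) :
    IsRotation ((lineReflection p).trans (lineReflection m)) := by
  have h : ∀ {q : En n}, q ≠ 0 → LinearMap.det
      ((lineReflection q).toLinearEquiv : En n →ₗ[ℝ] En n) = (-1) ^ (n - 1) := by
    intro q hq
    rw [← finrank_orthogonal_line hq]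
    exact Submodule.det_reflection _
  have h2 : (((lineReflection p).trans (lineReflection m)).toLinearEquiv : En n →ₗ[ℝ] En n) =
      ((lineReflection m).toLinearEquiv : En n →ₗ[ℝ] En n) ∘ₗ
      ((lineReflection p).toLinearEquiv : En n →ₗ[ℝ] En n) := rfl
  rw [IsRotation, h2, LinearMap.det_comp, h hm, h hp, ← mul_pow]
  simp

theorem rotNorm_lineReflection_trans_le {n : ℕ} {m p : En n} (hm : m ≠ 0) (hp : p ≠ 0) :
    rotNorm ((lineReflection p).trans (lineReflection m)) ≤ 8 * ‖m - p‖ / ‖p‖ := by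
  refine Real.iSup_le (fun ζ => ?_) (by positivity)
  have h := norm_lineReflection_sub_le hm hp (lineReflection p ζ)
  rw [lineReflection_lineReflection, LinearIsometryEquiv.norm_map,
    norm_eq_of_mem_sphere, mul_one] at h
  exact h

/-- The line reflection in `bisector ζ w` maps the unit vector `ζ` to the direction of `w`. -/
def bisector {n : ℕ} (ζ w : En n) : En n := w + ‖w‖ • ζ

theorem continuous_bisector {n : ℕ} (ζ : En n) : Continuous (bisector ζ) := by
  unfold bisector; fun_prop

theorem norm_sub_le_bisector {n : ℕ} {ζ : En n} (hζ : ‖ζ‖ = 1) {w v : En n}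
    (hw : 0 ≤ inner ℝ ζ w) (hv : 0 ≤ inner ℝ ζ v) :
    ‖w - v‖ ≤ 2 * ‖bisector ζ w - bisector ζ v‖ := by
  set q := bisector ζ w - bisector ζ v with hq
  set t := ‖w‖ - ‖v‖ with ht
  have hd : w - v = q - t • ζ := by
    rw [hq, ht, bisector, bisector, sub_smul]; abel
  have h1 : t * (‖w‖ + ‖v‖) = inner ℝ (w - v) (w + v) := by
    rw [inner_sub_left, inner_add_right, inner_add_right, real_inner_self_eq_norm_sq,
      real_inner_self_eq_norm_sq, real_inner_comm v w, ht]
    ring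
  have h2 : t * (‖w‖ + ‖v‖ + inner ℝ ζ (w + v)) = inner ℝ q (w + v) := by
    rw [mul_add, h1, hd, inner_sub_left, inner_smul_left]; simp
  have h3 : 0 ≤ inner ℝ ζ (w + v) := by rw [inner_add_right]; positivity
  have h4 : |t| * (‖w‖ + ‖v‖) ≤ ‖q‖ * (‖w‖ + ‖v‖) := by
    calc |t| * (‖w‖ + ‖v‖) ≤ |t| * (‖w‖ + ‖v‖ + inner ℝ ζ (w + v)) :=
        mul_le_mul_of_nonneg_left (by linarith) (abs_nonneg t)
      _ = |inner ℝ q (w + v)| := by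
        rw [← h2, abs_mul, abs_of_nonneg (a := _ + _) (by positivity)]
      _ ≤ ‖q‖ * ‖w + v‖ := abs_real_inner_le_norm _ _
      _ ≤ _ := by gcongr; exact norm_add_le _ _
  have h5 : |t| ≤ ‖q‖ := by
    rcases (add_nonneg (norm_nonneg w) (norm_nonneg v)).eq_or_lt with h | h
    · have hw0 := norm_nonneg w
      have hv0 := norm_nonneg v
      have : t = 0 := by rw [ht]; linarith
      rw [this]; simp
    · exact le_of_mul_le_mul_right h4 h
  calc ‖w - v‖ = ‖q - t • ζ‖ := by rw [hd]
    _ ≤ ‖q‖ + ‖t • ζ‖ := norm_sub_le _ _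
    _ = ‖q‖ + |t| := by rw [norm_smul, hζ, mul_one, Real.norm_eq_abs]
    _ ≤ _ := by linarith

theorem norm_bisector_sub_le {n : ℕ} {ζ : En n} (hζ : ‖ζ‖ = 1) (w v : En n) :
    ‖bisector ζ w - bisector ζ v‖ ≤ 2 * ‖w - v‖ := by
  have : bisector ζ w - bisector ζ v = (w - v) + (‖w‖ - ‖v‖) • ζ := by
    rw [bisector, bisector, sub_smul]; abel
  rw [this]
  refine (norm_add_le _ _).trans ?_
  rw [norm_smul, hζ, mul_one, Real.norm_eq_abs]
  linarith [abs_norm_sub_norm_le w v]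

theorem norm_bisector_sq {n : ℕ} {ζ : En n} (hζ : ‖ζ‖ = 1) (w : En n) :
    ‖bisector ζ w‖ ^ 2 = 2 * ‖w‖ * (‖w‖ + inner ℝ ζ w) := by
  rw [bisector, norm_add_sq_real, norm_smul, hζ, inner_smul_right, real_inner_comm]
  simp; ring

theorem lineReflection_bisector {n : ℕ} {ζ : En n} (hζ : ‖ζ‖ = 1) {w : En n} (hw0 : w ≠ 0)
    (hw : 0 ≤ inner ℝ ζ w) : lineReflection (bisector ζ w) ζ = ‖w‖⁻¹ • w := by
  have hw' : 0 < ‖w‖ := norm_pos_iff.2 hw0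
  have h1 : inner ℝ (bisector ζ w) ζ = ‖w‖ + inner ℝ ζ w := by
    rw [bisector, inner_add_left, inner_smul_left, real_inner_self_eq_norm_sq, hζ,
      real_inner_comm]
    simp; ring
  rw [lineReflection_apply, norm_bisector_sq hζ, h1, smul_smul]
  have : 2 * ((‖w‖ + inner ℝ ζ w) / (2 * ‖w‖ * (‖w‖ + inner ℝ ζ w))) = ‖w‖⁻¹ := by
    have : ‖w‖ + inner ℝ ζ w ≠ 0 := by positivity
    field_simp
  rw [this, bisector, smul_add, smul_smul, inv_mul_cancel₀ hw'.ne', one_smul]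
  abel

theorem volume_image_le_of_lipschitzOn {n : ℕ} {K : NNReal} {f : En n → En n} {t : Set (En n)}
    (hf : LipschitzOnWith K f t) : volume (f '' t) ≤ (K : ℝ≥0∞) ^ n * volume t := by
  have hH := hf.hausdorffMeasure_image_le (d := (n : ℝ)) (by positivity)
  have : IsAddHaarMeasure (μH[(n : ℝ)] : Measure (En n)) := by
    simpa using isAddHaarMeasure_hausdorffMeasure (E := En n)
  rw [isAddLeftInvariant_eq_smul (volume : Measure (En n)) (μH[(n : ℝ)])]
  simp only [coe_nnreal_smul_apply]
  rw [mul_left_comm]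
  gcongr
  simpa using hH

theorem map_bisector_le {n : ℕ} {ζ : En n} (hζ : ‖ζ‖ = 1) :
    (volume.restrict {w : En n | 0 ≤ inner ℝ ζ w}).map (bisector ζ) ≤
      (2 : ℝ≥0∞) ^ n • (volume : Measure (En n)) := by
  set D := {w : En n | 0 ≤ inner ℝ ζ w}
  have hinj : InjOn (bisector ζ) D := by
    intro w hw v hv h
    have := norm_sub_le_bisector hζ hw hv
    rw [h, sub_self, norm_zero, mul_zero] at this
    exact sub_eq_zero.1 (norm_le_zero_iff.1 this)
  refine Measure.le_iff.2 fun A hA => ?_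
  have hm := (continuous_bisector ζ).measurable
  rw [map_apply hm hA, restrict_apply (hm hA)]
  set g := Function.invFunOn (bisector ζ) D
  have hg : ∀ w ∈ D, g (bisector ζ w) = w := fun w hw => hinj.leftInvOn_invFunOn hw
  have hlip : LipschitzOnWith 2 g (bisector ζ '' (bisector ζ ⁻¹' A ∩ D)) := by
    refine LipschitzOnWith.of_dist_le_mul ?_
    rintro _ ⟨w, hw, rfl⟩ _ ⟨v, hv, rfl⟩
    rw [hg w hw.2, hg v hv.2, dist_eq_norm, dist_eq_norm]
    exact norm_sub_le_bisector hζ hw.2 hv.2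
  calc volume (bisector ζ ⁻¹' A ∩ D)
      ≤ volume (g '' (bisector ζ '' (bisector ζ ⁻¹' A ∩ D))) :=
        measure_mono fun w hw => ⟨_, ⟨w, hw, rfl⟩, hg w hw.2⟩
    _ ≤ (2 : NNReal) ^ n * volume (bisector ζ '' (bisector ζ ⁻¹' A ∩ D)) :=
        volume_image_le_of_lipschitzOn hlip
    _ ≤ (2 : ℝ≥0∞) ^ n * volume A := by
        gcongr
        · simp
        · rintro _ ⟨w, hw, rfl⟩; exact hw.1

theorem lintegral_bisector_le {n : ℕ} {ζ : En n} (hζ : ‖ζ‖ = 1) {f : En n → ℝ≥0∞}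
    (hf : Measurable f) :
    ∫⁻ w in {w : En n | 0 ≤ inner ℝ ζ w}, f (bisector ζ w) ≤ 2 ^ n * ∫⁻ m, f m := by
  rw [← lintegral_map hf (continuous_bisector ζ).measurable, ← smul_eq_mul,
    ← lintegral_smul_measure]
  exact lintegral_mono' (map_bisector_le hζ) le_rfl

/-- The constant in the comparison between translations and rotations. -/
def rotationConst (n : ℕ) : ℝ≥0∞ :=
  (n * volume (ball (0 : En n) (1 / 8)))⁻¹ *
    (2 ^ n * (2 ^ n * (2 ^ n * volume (closedBall (0 : En n) 8))))

theorem rotationConst_ne_top {n : ℕ} (hn : n ≠ 0) : rotationConst n ≠ ⊤ := by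
  have h1 : volume (ball (0 : En n) (1 / 8)) ≠ 0 := (measure_ball_pos _ _ (by norm_num)).ne'
  have h2 : volume (closedBall (0 : En n) 8) ≠ ⊤ := measure_closedBall_lt_top.ne
  have h3 : (2 : ℝ≥0∞) ^ n ≠ ⊤ := by simp
  refine ENNReal.mul_ne_top (ENNReal.inv_ne_top.2 (mul_ne_zero (by exact_mod_cast hn) h1)) ?_
  exact ENNReal.mul_ne_top h3 (ENNReal.mul_ne_top h3 (ENNReal.mul_ne_top h3 h2))

theorem measurableSet_setOf_and {β : Type*} [MeasurableSpace β] {p q : β → Prop}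
    (hp : MeasurableSet {a | p a}) (hq : MeasurableSet {a | q a}) :
    MeasurableSet {a | p a ∧ q a} := by
  rw [ofPred_and]; exact hp.inter hq

/-- Pairs `(m, p)` of nearby vectors with `p` of size comparable to one. -/
def nearbyPairs (n : ℕ) (r : ℝ) : Set (En n × En n) :=
  {q | 1 / 4 ≤ ‖q.2‖ ∧ ‖q.2‖ ≤ 8 ∧ ‖q.1 - q.2‖ < 2 * r}

theorem measurableSet_nearbyPairs (n : ℕ) (r : ℝ) : MeasurableSet (nearbyPairs n r) := by
  refine measurableSet_setOf_and (measurableSet_le ?_ ?_)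
    (measurableSet_setOf_and (measurableSet_le ?_ ?_) (measurableSet_lt ?_ ?_)) <;> fun_prop

theorem ne_zero_of_mem_nearbyPairs {n : ℕ} {r : ℝ} (hr : r < 1 / 8) {m p : En n}
    (h : (m, p) ∈ nearbyPairs n r) : m ≠ 0 ∧ p ≠ 0 := by
  obtain ⟨h1, -, h3⟩ := h
  simp only at h1 h3
  constructor
  · rintro rfl
    rw [zero_sub, norm_neg] at h3
    linarith
  · rintro rfl
    rw [norm_zero] at h1
    linarith

section Averaging

variable {n : ℕ} {Ω : En n → ℝ} {ψ : ℝ → ℝ≥0∞}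

/-- The oscillation of `Ω` between the images of `ζ` under two nearby line reflections. -/
def reflectionKernel (Ω : En n → ℝ) (ψ : ℝ → ℝ≥0∞) (r : ℝ) (ζ p m : En n) : ℝ≥0∞ :=
  (nearbyPairs n r).indicator
    (fun q => ψ (Ω (lineReflection q.1 ζ) - Ω (lineReflection q.2 ζ))) (m, p)

/-- Triples `(ζ, z, w)` with `z` in an annulus, `ζ` in a cap around `z` and `w` close to `z`. -/
def capTriples (n : ℕ) (r : ℝ) : Set ((En n × En n) × En n) :=
  {t | 1 / 4 ≤ ‖t.1.2‖ ∧ ‖t.1.2‖ ≤ 4 ∧ ‖t.1.2‖ / 2 ≤ inner ℝ t.1.1 t.1.2 ∧ ‖t.2 - t.1.2‖ < r}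

/-- The oscillation of `Ω` between nearby points of an annulus, localised to a cap around `ζ`. -/
def capKernel (Ω : En n → ℝ) (ψ : ℝ → ℝ≥0∞) (r : ℝ) (ζ z w : En n) : ℝ≥0∞ :=
  (capTriples n r).indicator (fun t => ψ (Ω t.2 - Ω t.1.2)) ((ζ, z), w)

theorem measurableSet_capTriples (n : ℕ) (r : ℝ) : MeasurableSet (capTriples n r) := by
  refine measurableSet_setOf_and (measurableSet_le ?_ ?_)
    (measurableSet_setOf_and (measurableSet_le ?_ ?_)
      (measurableSet_setOf_and (measurableSet_le ?_ ?_) (measurableSet_lt ?_ ?_))) <;> fun_prop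

theorem measurable_reflectionKernel (hΩ : Measurable Ω) (hψ : Measurable ψ) (r : ℝ)
    {β : Type*} [MeasurableSpace β] {f g h : β → En n} (hf : Measurable f) (hg : Measurable g)
    (hh : Measurable h) : Measurable fun b => reflectionKernel Ω ψ r (f b) (g b) (h b) := by
  have h1 : Measurable fun b => ψ (Ω (lineReflection (h b) (f b)) -
      Ω (lineReflection (g b) (f b))) := by fun_prop
  exact h1.indicator (s := (fun b => (h b, g b)) ⁻¹' nearbyPairs n r)
    ((measurableSet_nearbyPairs n r).preimage (by fun_prop))

theorem measurable_capKernel (hΩ : Measurable Ω) (hψ : Measurable ψ) (r : ℝ)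
    {β : Type*} [MeasurableSpace β] {f g h : β → En n} (hf : Measurable f) (hg : Measurable g)
    (hh : Measurable h) : Measurable fun b => capKernel Ω ψ r (f b) (g b) (h b) := by
  have h1 : Measurable fun b => ψ (Ω (h b) - Ω (g b)) := by fun_prop
  exact h1.indicator (s := (fun b => ((f b, g b), h b)) ⁻¹' capTriples n r)
    ((measurableSet_capTriples n r).preimage (by fun_prop))

theorem lintegral_nearbyPairs_le (hΩ : Measurable Ω) (hψ : Measurable ψ) {r : ℝ}
    (hr8 : r < 1 / 8) {B : ℝ≥0∞}
    (hB : ∀ ρ : En n ≃ₗᵢ[ℝ] En n, IsRotation ρ → rotNorm ρ ≤ 64 * r →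
      ∫⁻ ζ : sphere (0 : En n) 1, ψ (Ω (ρ ζ) - Ω ζ) ∂sphereMeasure n ≤ B) :
    ∫⁻ ζ : sphere (0 : En n) 1, (∫⁻ p : En n, ∫⁻ m : En n, reflectionKernel Ω ψ r ζ p m)
        ∂sphereMeasure n ≤
      B * volume (ball (0 : En n) (2 * r)) * volume (closedBall (0 : En n) 8) := by
  have hmeas : Measurable fun q : (sphere (0 : En n) 1 × En n) × En n =>
      reflectionKernel Ω ψ r q.1.1 q.1.2 q.2 :=
    measurable_reflectionKernel hΩ hψ r (by fun_prop) (by fun_prop) (by fun_prop)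
  have hpoint : ∀ m p : En n, ∫⁻ ζ : sphere (0 : En n) 1, reflectionKernel Ω ψ r ζ p m
      ∂sphereMeasure n ≤ (nearbyPairs n r).indicator (fun _ => B) (m, p) := by
    intro m p
    unfold reflectionKernel
    by_cases hq : (m, p) ∈ nearbyPairs n r
    · simp only [indicator_of_mem hq]
      obtain ⟨hm, hp⟩ := ne_zero_of_mem_nearbyPairs hr8 hq
      set ρ := (lineReflection p).trans (lineReflection m) with hρ
      have hmρ : Measurable fun ζ : sphere (0 : En n) 1 => ψ (Ω (ρ ζ) - Ω ζ) :=
        hψ.comp ((hΩ.comp (ρ.continuous.measurable.comp measurable_subtype_coe)).sub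
          (hΩ.comp measurable_subtype_coe))
      have h1 := (measurePreserving_sphereMap (lineReflection p)).lintegral_comp hmρ
      have h2 : ∀ ζ : sphere (0 : En n) 1, ψ (Ω (ρ (sphereMap (lineReflection p) ζ)) -
          Ω (sphereMap (lineReflection p) ζ)) =
          ψ (Ω (lineReflection m ζ) - Ω (lineReflection p ζ)) := by
        intro ζ
        simp [hρ, sphereMap, lineReflection_lineReflection]
      simp only [h2] at h1
      rw [h1]
      refine hB ρ (isRotation_lineReflection_trans hm hp)
        ((rotNorm_lineReflection_trans_le hm hp).trans ?_)
      obtain ⟨h3, -, h4⟩ := hq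
      simp only at h3 h4
      rw [div_le_iff₀ (by linarith)]
      nlinarith [norm_nonneg (m - p)]
    · simp [indicator_of_notMem hq]
  calc _ = ∫⁻ p : En n, ∫⁻ ζ : sphere (0 : En n) 1,
        (∫⁻ m : En n, reflectionKernel Ω ψ r ζ p m) ∂sphereMeasure n := by
        exact lintegral_lintegral_swap hmeas.lintegral_prod_right'.aemeasurable
    _ = ∫⁻ p : En n, ∫⁻ m : En n, ∫⁻ ζ : sphere (0 : En n) 1,
        reflectionKernel Ω ψ r ζ p m ∂sphereMeasure n := by
        refine lintegral_congr fun p => lintegral_lintegral_swap ?_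
        exact (measurable_reflectionKernel hΩ hψ r (by fun_prop) (by fun_prop)
          (by fun_prop)).aemeasurable
    _ ≤ ∫⁻ p : En n, ∫⁻ m : En n, (nearbyPairs n r).indicator (fun _ => B) (m, p) :=
        lintegral_mono fun p => lintegral_mono fun m => hpoint m p
    _ ≤ ∫⁻ p : En n, (closedBall (0 : En n) 8).indicator
          (fun _ => B * volume (ball (0 : En n) (2 * r))) p := by
        refine lintegral_mono fun p => ?_
        by_cases hp : ‖p‖ ≤ 8
        · rw [indicator_of_mem (by simpa using hp)]
          calc _ ≤ ∫⁻ m : En n, (ball p (2 * r)).indicator (fun _ => B) m := by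
                refine lintegral_mono fun m => ?_
                by_cases hq : (m, p) ∈ nearbyPairs n r
                · rw [indicator_of_mem hq, indicator_of_mem]
                  rw [mem_ball, dist_eq_norm]; exact hq.2.2
                · simp [indicator_of_notMem hq]
            _ = _ := by
              rw [lintegral_indicator_const measurableSet_ball, addHaar_ball_center]
        · have : ∀ m, (m, p) ∉ nearbyPairs n r := fun m hq => hp hq.2.1
          simp [this]
    _ = _ := by rw [lintegral_indicator_const measurableSet_closedBall]

theorem lintegral_cap_le (hΩ : Measurable Ω) (hhom : HomZero Ω) (hψ : Measurable ψ) {r : ℝ}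
    (hr8 : r < 1 / 8) {ζ : En n} (hζ : ‖ζ‖ = 1) :
    ∫⁻ z : En n, ∫⁻ w : En n, capKernel Ω ψ r ζ z w ≤
      2 ^ n * (2 ^ n * ∫⁻ p : En n, ∫⁻ m : En n, reflectionKernel Ω ψ r ζ p m) := by
  set D := {w : En n | 0 ≤ inner ℝ ζ w} with hD
  have hDm : MeasurableSet D := measurableSet_le measurable_const (by fun_prop)
  have hHm : Measurable fun q : En n × En n => reflectionKernel Ω ψ r ζ q.1 q.2 :=
    measurable_reflectionKernel hΩ hψ r (by fun_prop) (by fun_prop) (by fun_prop)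
  have hΩbis : ∀ {w : En n}, w ≠ 0 → w ∈ D →
      Ω (lineReflection (bisector ζ w) ζ) = Ω w := by
    intro w hw0 hw
    rw [lineReflection_bisector hζ hw0 hw, hhom _ (inv_pos.2 (norm_pos_iff.2 hw0)) _ hw0]
  calc _ ≤ ∫⁻ z in D, ∫⁻ w in D, reflectionKernel Ω ψ r ζ (bisector ζ z) (bisector ζ w) := by
        rw [← lintegral_indicator hDm]
        refine lintegral_mono fun z => ?_
        by_cases hz : 1 / 4 ≤ ‖z‖ ∧ ‖z‖ ≤ 4 ∧ ‖z‖ / 2 ≤ inner ℝ ζ z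
        · obtain ⟨h1, h2, h3⟩ := hz
          have hzD : z ∈ D := by
            simp only [hD, mem_ofPred_eq]; linarith
          rw [indicator_of_mem hzD, ← lintegral_indicator hDm]
          refine lintegral_mono fun w => ?_
          by_cases hw : ‖w - z‖ < r
          · have h5 : inner ℝ ζ w = inner ℝ ζ (w - z) + inner ℝ ζ z := by
              rw [← inner_add_right, sub_add_cancel]
            have h6 := (abs_le.1 (abs_real_inner_le_norm ζ (w - z))).1
            rw [hζ, one_mul] at h6
            have h7 : 0 < inner ℝ ζ w := by linarith
            have hwD : w ∈ D := h7.le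
            have hw0 : w ≠ 0 := by rintro rfl; simp at h7
            have hz0 : z ≠ 0 := by rintro rfl; norm_num at h1
            have hmem : (bisector ζ w, bisector ζ z) ∈ nearbyPairs n r := by
              refine ⟨?_, ?_, ?_⟩
              · have := norm_bisector_sq hζ z
                have h8 : ‖z‖ ^ 2 ≤ ‖bisector ζ z‖ ^ 2 := by
                  rw [this]; nlinarith
                exact h1.trans ((pow_le_pow_iff_left₀ (norm_nonneg _) (norm_nonneg _)
                  two_ne_zero).1 h8)
              · refine (norm_add_le _ _).trans ?_
                rw [norm_smul, hζ, norm_norm]; linarith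
              · exact (norm_bisector_sub_le hζ w z).trans_lt (by linarith)
            have hcap : ((ζ, z), w) ∈ capTriples n r := ⟨h1, h2, h3, hw⟩
            rw [capKernel, indicator_of_mem hcap, indicator_of_mem hwD, reflectionKernel,
              indicator_of_mem hmem]
            simp only
            rw [hΩbis hw0 hwD, hΩbis hz0 hzD]
          · rw [capKernel, indicator_of_notMem (fun h => hw h.2.2.2)]
            exact zero_le
        · have : ∀ w : En n, ((ζ, z), w) ∉ capTriples n r :=
            fun w h => hz ⟨h.1, h.2.1, h.2.2.1⟩
          simp only [capKernel, indicator_of_notMem (this _), lintegral_zero]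
          exact zero_le
    _ ≤ ∫⁻ z in D, 2 ^ n * ∫⁻ m, reflectionKernel Ω ψ r ζ (bisector ζ z) m :=
        lintegral_mono fun z => lintegral_bisector_le hζ
          (f := fun m => reflectionKernel Ω ψ r ζ (bisector ζ z) m)
          (measurable_reflectionKernel hΩ hψ r (by fun_prop) (by fun_prop) (by fun_prop))
    _ ≤ 2 ^ n * ∫⁻ p, 2 ^ n * ∫⁻ m, reflectionKernel Ω ψ r ζ p m :=
        lintegral_bisector_le hζ (f := fun p => 2 ^ n * ∫⁻ m, reflectionKernel Ω ψ r ζ p m)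
          (hHm.lintegral_prod_right'.const_mul _)
    _ = _ := by rw [lintegral_const_mul _ hHm.lintegral_prod_right']

theorem lintegral_translation_le (hn : n ≠ 0) (hΩ : Measurable Ω) (hhom : HomZero Ω)
    (hψ : Measurable ψ) {r : ℝ} (hr8 : r < 1 / 8) {B : ℝ≥0∞}
    (hB : ∀ ρ : En n ≃ₗᵢ[ℝ] En n, IsRotation ρ → rotNorm ρ ≤ 64 * r →
      ∫⁻ ζ : sphere (0 : En n) 1, ψ (Ω (ρ ζ) - Ω ζ) ∂sphereMeasure n ≤ B) :
    ∫⁻ z in {z : En n | 1 / 4 ≤ ‖z‖ ∧ ‖z‖ ≤ 4}, ∫⁻ w in ball z r, ψ (Ω w - Ω z) ≤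
      rotationConst n * volume (ball (0 : En n) r) * B := by
  set c : ℝ≥0∞ := n * volume (ball (0 : En n) (1 / 8)) with hc
  have hc0 : c ≠ 0 := mul_ne_zero (by exact_mod_cast hn)
    (measure_ball_pos _ _ (by norm_num)).ne'
  have hct : c ≠ ⊤ := ENNReal.mul_ne_top (by simp) measure_ball_lt_top.ne
  have hFm : Measurable fun q : (sphere (0 : En n) 1 × En n) × En n =>
      capKernel Ω ψ r q.1.1 q.1.2 q.2 :=
    measurable_capKernel hΩ hψ r (by fun_prop) (by fun_prop) (by fun_prop)
  have hA : MeasurableSet {z : En n | 1 / 4 ≤ ‖z‖ ∧ ‖z‖ ≤ 4} := by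
    refine measurableSet_setOf_and (measurableSet_le ?_ ?_) (measurableSet_le ?_ ?_) <;> fun_prop
  have hmain : c * ∫⁻ z in {z : En n | 1 / 4 ≤ ‖z‖ ∧ ‖z‖ ≤ 4}, ∫⁻ w in ball z r,
      ψ (Ω w - Ω z) ≤ 2 ^ n * (2 ^ n * (B * volume (ball (0 : En n) (2 * r)) *
        volume (closedBall (0 : En n) 8))) := by
    calc _ = ∫⁻ z in {z : En n | 1 / 4 ≤ ‖z‖ ∧ ‖z‖ ≤ 4}, c * ∫⁻ w in ball z r,
          ψ (Ω w - Ω z) := (lintegral_const_mul' _ _ hct).symm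
      _ ≤ ∫⁻ z : En n, ∫⁻ ζ : sphere (0 : En n) 1, (∫⁻ w : En n, capKernel Ω ψ r ζ z w)
            ∂sphereMeasure n := by
          rw [← lintegral_indicator hA]
          refine lintegral_mono fun z => ?_
          by_cases hz : 1 / 4 ≤ ‖z‖ ∧ ‖z‖ ≤ 4
          · have hz0 : z ≠ 0 := by rintro rfl; norm_num at hz
            have hcap : MeasurableSet
                {ζ : sphere (0 : En n) 1 | ‖z‖ / 2 ≤ inner ℝ (ζ : En n) z} :=
              measurableSet_le measurable_const (by fun_prop)
            rw [indicator_of_mem (show z ∈ _ from hz)]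
            calc c * ∫⁻ w in ball z r, ψ (Ω w - Ω z)
                ≤ (∫⁻ w in ball z r, ψ (Ω w - Ω z)) *
                  sphereMeasure n {ζ | ‖z‖ / 2 ≤ inner ℝ (ζ : En n) z} := by
                  rw [mul_comm]; gcongr; exact sphereMeasure_cap_ge hz0
              _ = ∫⁻ ζ : sphere (0 : En n) 1,
                  {ζ : sphere (0 : En n) 1 | ‖z‖ / 2 ≤ inner ℝ (ζ : En n) z}.indicator
                    (fun _ => ∫⁻ w in ball z r, ψ (Ω w - Ω z)) ζ ∂sphereMeasure n := by
                  rw [lintegral_indicator_const hcap]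
              _ ≤ _ := by
                  refine lintegral_mono fun ζ => ?_
                  by_cases hζ : ‖z‖ / 2 ≤ inner ℝ (ζ : En n) z
                  · rw [indicator_of_mem (show ζ ∈ _ from hζ),
                      ← lintegral_indicator measurableSet_ball]
                    refine lintegral_mono fun w => ?_
                    by_cases hw : w ∈ ball z r
                    · rw [indicator_of_mem hw]
                      rw [mem_ball, dist_eq_norm] at hw
                      have hmem : (((ζ : En n), z), w) ∈ capTriples n r :=
                        ⟨hz.1, hz.2, hζ, hw⟩
                      rw [capKernel, indicator_of_mem hmem]
                    · rw [indicator_of_notMem hw]; exact zero_le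
                  · have hζ' : ζ ∉ {ζ : sphere (0 : En n) 1 |
                        ‖z‖ / 2 ≤ inner ℝ (ζ : En n) z} := hζ
                    rw [indicator_of_notMem hζ']; exact zero_le
          · have hz' : z ∉ {z : En n | 1 / 4 ≤ ‖z‖ ∧ ‖z‖ ≤ 4} := hz
            rw [indicator_of_notMem hz']; exact zero_le
      _ = ∫⁻ ζ : sphere (0 : En n) 1, (∫⁻ z : En n, ∫⁻ w : En n, capKernel Ω ψ r ζ z w)
            ∂sphereMeasure n :=
          (lintegral_lintegral_swap hFm.lintegral_prod_right'.aemeasurable).symm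
      _ ≤ ∫⁻ ζ : sphere (0 : En n) 1, 2 ^ n * (2 ^ n * ∫⁻ p : En n, ∫⁻ m : En n,
            reflectionKernel Ω ψ r ζ p m) ∂sphereMeasure n :=
          lintegral_mono fun ζ => lintegral_cap_le hΩ hhom hψ hr8 (norm_eq_of_mem_sphere ζ)
      _ ≤ _ := by
          rw [lintegral_const_mul' _ _ (by simp), lintegral_const_mul' _ _ (by simp)]
          gcongr
          exact lintegral_nearbyPairs_le hΩ hψ hr8 hB
  have h2r : volume (ball (0 : En n) (2 * r)) = 2 ^ n * volume (ball (0 : En n) r) := by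
    rw [addHaar_ball_mul_of_pos _ _ two_pos, finrank_euclideanSpace_fin,
      ENNReal.ofReal_pow zero_le_two, ENNReal.ofReal_ofNat]
  rw [h2r] at hmain
  calc _ = c⁻¹ * (c * ∫⁻ z in {z : En n | 1 / 4 ≤ ‖z‖ ∧ ‖z‖ ≤ 4}, ∫⁻ w in ball z r,
        ψ (Ω w - Ω z)) := by
        rw [← mul_assoc, ENNReal.inv_mul_cancel hc0 hct, one_mul]
    _ ≤ c⁻¹ * (2 ^ n * (2 ^ n * (B * (2 ^ n * volume (ball (0 : En n) r)) *
        volume (closedBall (0 : En n) 8)))) := mul_le_mul' le_rfl hmain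
    _ = _ := by rw [rotationConst, ← hc]; ring

end Averaging

section Modulus

variable {n : ℕ} {s : ℝ≥0∞} {Ω : En n → ℝ}

/-- The integral modulus of continuity as an extended nonnegative real. -/
def emodCont (s : ℝ≥0∞) (Ω : En n → ℝ) (δ : ℝ) : ℝ≥0∞ :=
  ⨆ ρ : {ρ : En n ≃ₗᵢ[ℝ] En n // IsRotation ρ ∧ rotNorm ρ < δ},
    eLpNorm (fun x : sphere (0 : En n) 1 => Ω (ρ.1 (x : En n)) - Ω (x : En n)) s
      (sphereMeasure n)

theorem eLpNorm_rotation_sub_le_emodCont {ρ : En n ≃ₗᵢ[ℝ] En n} {δ : ℝ} (hρ : IsRotation ρ)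
    (hδ : rotNorm ρ < δ) :
    eLpNorm (fun x : sphere (0 : En n) 1 => Ω (ρ (x : En n)) - Ω (x : En n)) s
      (sphereMeasure n) ≤ emodCont s Ω δ :=
  le_iSup (fun ρ : {ρ : En n ≃ₗᵢ[ℝ] En n // IsRotation ρ ∧ rotNorm ρ < δ} =>
    eLpNorm (fun x : sphere (0 : En n) 1 => Ω (ρ.1 (x : En n)) - Ω (x : En n)) s
      (sphereMeasure n)) ⟨ρ, hρ, hδ⟩

theorem emodCont_mono : Monotone (emodCont s Ω) := fun _ _ hab =>
  iSup_le fun ρ => eLpNorm_rotation_sub_le_emodCont ρ.2.1 (ρ.2.2.trans_le hab)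

theorem emodCont_le (hs : 1 ≤ s) (hΩ : Measurable Ω) (δ : ℝ) :
    emodCont s Ω δ ≤ 2 * sphereLpNorm s Ω := by
  refine iSup_le fun ρ => ?_
  have hm : Measurable fun x : sphere (0 : En n) 1 => Ω (x : En n) :=
    hΩ.comp measurable_subtype_coe
  have hmp := measurePreserving_sphereMap ρ.1
  have h := eLpNorm_comp_measurePreserving (p := s) hm.aestronglyMeasurable hmp
  refine (eLpNorm_sub_le (hm.comp hmp.measurable).aestronglyMeasurable
    hm.aestronglyMeasurable hs).trans ?_
  rw [h, two_mul]
  rfl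

theorem emodCont_ne_top (hs : 1 ≤ s) (hΩ : Measurable Ω) (h : sphereLpNorm s Ω ≠ ⊤) (δ : ℝ) :
    emodCont s Ω δ ≠ ⊤ :=
  ((emodCont_le hs hΩ δ).trans_lt (ENNReal.mul_lt_top (by simp) h.lt_top)).ne

theorem modCont_mono (hs : 1 ≤ s) (hΩ : Measurable Ω) (h : sphereLpNorm s Ω ≠ ⊤) :
    Monotone (modCont s Ω) := fun _ b hab =>
  ENNReal.toReal_mono (emodCont_ne_top hs hΩ h b) (emodCont_mono hab)

end Modulus

section Translation

variable {n : ℕ} {Ω : En n → ℝ} {ψ : ℝ → ℝ≥0∞}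

/-- A closed annulus. -/
def annulus (n : ℕ) : Set (En n) := {z | 1 / 2 ≤ ‖z‖ ∧ ‖z‖ ≤ 3}

theorem measurableSet_annulus (n : ℕ) : MeasurableSet (annulus n) := by
  refine measurableSet_setOf_and (measurableSet_le ?_ ?_) (measurableSet_le ?_ ?_) <;> fun_prop

theorem lintegral_ball_translation_le (hn : n ≠ 0) (hΩ : Measurable Ω) (hhom : HomZero Ω)
    (hψ : Measurable ψ) {r : ℝ} (hr16 : r < 1 / 16) {B : ℝ≥0∞}
    (hB : ∀ ρ : En n ≃ₗᵢ[ℝ] En n, IsRotation ρ → rotNorm ρ ≤ 128 * r →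
      ∫⁻ ζ : sphere (0 : En n) 1, ψ (Ω (ρ ζ) - Ω ζ) ∂sphereMeasure n ≤ B)
    {y : En n} (hy : ‖y‖ ≤ r) :
    ∫⁻ u in ball (0 : En n) r, ∫⁻ z in annulus n, ψ (Ω (z + u) - Ω (z + y)) ≤
      rotationConst n * (2 ^ n * volume (ball (0 : En n) r)) * B := by
  set A4 : Set (En n) := {z : En n | 1 / 4 ≤ ‖z‖ ∧ ‖z‖ ≤ 4} with hA4
  have hA4m : MeasurableSet A4 := by
    refine measurableSet_setOf_and (measurableSet_le ?_ ?_) (measurableSet_le ?_ ?_) <;> fun_prop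
  have hm : Measurable fun q : En n × En n => ψ (Ω (q.2 + q.1) - Ω (q.2 + y)) := by fun_prop
  have h2r : volume (ball (0 : En n) (2 * r)) = 2 ^ n * volume (ball (0 : En n) r) := by
    rw [addHaar_ball_mul_of_pos _ _ two_pos, finrank_euclideanSpace_fin,
      ENNReal.ofReal_pow zero_le_two, ENNReal.ofReal_ofNat]
  rw [← h2r]
  refine le_trans ?_ (lintegral_translation_le hn hΩ hhom hψ (r := 2 * r) (by linarith)
    (B := B) fun ρ h1 h2 => hB ρ h1 (by linarith))
  calc _ = ∫⁻ z in annulus n, ∫⁻ u in ball (0 : En n) r, ψ (Ω (z + u) - Ω (z + y)) :=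
        lintegral_lintegral_swap hm.aemeasurable
    _ ≤ ∫⁻ z in annulus n, ∫⁻ w in ball (z + y) (2 * r), ψ (Ω w - Ω (z + y)) := by
        refine lintegral_mono fun z => ?_
        rw [← lintegral_indicator measurableSet_ball, ← lintegral_indicator measurableSet_ball,
          ← lintegral_add_left_eq_self (indicator (ball (z + y) (2 * r)) _) z]
        refine lintegral_mono fun u => ?_
        by_cases hu : u ∈ ball (0 : En n) r
        · have : z + u ∈ ball (z + y) (2 * r) := by
            rw [mem_ball_zero_iff] at hu
            rw [mem_ball, dist_eq_norm, add_sub_add_left_eq_sub]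
            linarith [norm_sub_le u y]
          rw [indicator_of_mem hu, indicator_of_mem this]
        · rw [indicator_of_notMem hu]; exact zero_le
    _ ≤ ∫⁻ z, A4.indicator (fun z => ∫⁻ w in ball z (2 * r), ψ (Ω w - Ω z)) (z + y) := by
        rw [← lintegral_indicator (measurableSet_annulus n)]
        refine lintegral_mono fun z => ?_
        by_cases hz : z ∈ annulus n
        · have : z + y ∈ A4 := by
            obtain ⟨h1, h2⟩ := hz
            have h3 := norm_add_le z y
            have h4 : ‖z‖ ≤ ‖z + y‖ + ‖y‖ := by simpa using norm_sub_le (z + y) y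
            constructor <;> linarith
          rw [indicator_of_mem hz, indicator_of_mem this]
        · rw [indicator_of_notMem hz]; exact zero_le
    _ = _ := by rw [lintegral_add_right_eq_self, lintegral_indicator hA4m]

theorem exists_lintegral_translation_le (hn : n ≠ 0) (hΩ : Measurable Ω) (hhom : HomZero Ω)
    (hψ : Measurable ψ) {y : En n} (hy0 : y ≠ 0) (hy : ‖y‖ < 1 / 16) {B : ℝ≥0∞}
    (hB : ∀ ρ : En n ≃ₗᵢ[ℝ] En n, IsRotation ρ → rotNorm ρ ≤ 128 * ‖y‖ →
      ∫⁻ ζ : sphere (0 : En n) 1, ψ (Ω (ρ ζ) - Ω ζ) ∂sphereMeasure n ≤ B) :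
    ∃ u : En n, ∫⁻ z in annulus n, ψ (Ω (z + u) - Ω z) ≤ 2 * (rotationConst n * 2 ^ n) * B ∧
      ∫⁻ z in annulus n, ψ (Ω (z + u) - Ω (z + y)) ≤ 2 * (rotationConst n * 2 ^ n) * B := by
  set V := volume (ball (0 : En n) ‖y‖) with hV
  have hV0 : V ≠ 0 := (measure_ball_pos _ _ (norm_pos_iff.2 hy0)).ne'
  have hVt : V ≠ ⊤ := measure_ball_lt_top.ne
  have hm : ∀ v, Measurable fun u : En n => ∫⁻ z in annulus n, ψ (Ω (z + u) - Ω (z + v)) := by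
    intro v
    have : Measurable fun q : En n × En n => ψ (Ω (q.2 + q.1) - Ω (q.2 + v)) := by fun_prop
    exact this.lintegral_prod_right'
  obtain ⟨u, -, hu⟩ := exists_le_setLAverage (μ := volume) hV0 hVt
    ((hm 0).add (hm y)).aemeasurable
  have h0 := lintegral_ball_translation_le hn hΩ hhom hψ hy hB (y := 0) (by simp)
  have h1 := lintegral_ball_translation_le hn hΩ hhom hψ hy hB le_rfl
  rw [setLAverage_eq] at hu
  have hu' := hu.trans (c := 2 * (rotationConst n * 2 ^ n) * B) <| by
    refine ENNReal.div_le_of_le_mul ?_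
    simp only [Pi.add_apply]
    rw [lintegral_add_left (hm 0)]
    refine (add_le_add h0 h1).trans_eq ?_
    rw [← hV]; ring
  simp only [Pi.add_apply, add_zero] at hu'
  exact ⟨u, le_self_add.trans hu', le_add_self.trans hu'⟩

/-- The constant in the small-translation estimate. -/
def translationConst (n : ℕ) : ℝ≥0∞ := 1 + 2 * (rotationConst n * 2 ^ n)

theorem translationConst_ne_top (hn : n ≠ 0) : translationConst n ≠ ⊤ := by
  refine ENNReal.add_ne_top.2 ⟨by simp, ENNReal.mul_ne_top (by simp)
    (ENNReal.mul_ne_top (rotationConst_ne_top hn) (by simp))⟩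

theorem exists_eLpNorm_translation_le (hn : n ≠ 0) {s : ℝ≥0∞} (hs : 1 ≤ s) (hΩ : Measurable Ω)
    (hhom : HomZero Ω) {y : En n} (hy0 : y ≠ 0) (hy : ‖y‖ < 1 / 16) {δ : ℝ}
    (hδ : 128 * ‖y‖ < δ) :
    ∃ u : En n,
      eLpNorm (fun z => Ω (z + u) - Ω z) s (volume.restrict (annulus n)) ≤
        translationConst n * emodCont s Ω δ ∧
      eLpNorm (fun z => Ω (z + u) - Ω (z + y)) s (volume.restrict (annulus n)) ≤
        translationConst n * emodCont s Ω δ := by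
  have hM : ∀ ρ : En n ≃ₗᵢ[ℝ] En n, IsRotation ρ → rotNorm ρ ≤ 128 * ‖y‖ → _ :=
    fun ρ h1 h2 => eLpNorm_rotation_sub_le_emodCont (s := s) (Ω := Ω) h1 (h2.trans_lt hδ)
  set M := emodCont s Ω δ with hMdef
  have hs0 : s ≠ 0 := (one_pos.trans_le hs).ne'
  rcases eq_or_ne s ⊤ with rfl | hst
  · have hψ : Measurable ({t : ℝ | M < ‖t‖ₑ}.indicator (fun _ => (1 : ℝ≥0∞))) :=
      measurable_const.indicator (measurableSet_lt measurable_const measurable_enorm)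
    have key : ∀ {β : Type} [MeasurableSpace β] (μ : Measure β) (g : β → ℝ), Measurable g →
        ((∫⁻ b, {t : ℝ | M < ‖t‖ₑ}.indicator (fun _ => (1 : ℝ≥0∞)) (g b) ∂μ) = 0 ↔
          eLpNorm g ⊤ μ ≤ M) := by
      intro β _ μ g hg
      refine (lintegral_eq_zero_iff (hψ.comp hg)).trans ?_
      rw [eLpNorm_exponent_top]
      constructor
      · intro h
        refine essSup_le_of_ae_le _ ?_
        filter_upwards [h] with b hb
        by_contra hlt
        have : g b ∈ {t : ℝ | M < ‖t‖ₑ} := not_le.1 hlt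
        simp [indicator_of_mem this] at hb
      · intro h
        filter_upwards [enorm_ae_le_eLpNormEssSup g μ] with b hb
        have : g b ∉ {t : ℝ | M < ‖t‖ₑ} := (hb.trans h).not_gt
        simp [indicator_of_notMem this]
    obtain ⟨u, h1, h2⟩ := exists_lintegral_translation_le hn hΩ hhom hψ hy0 hy (B := 0)
      fun ρ h1 h2 => ((key _ _ ((hΩ.comp
        (ρ.continuous.measurable.comp measurable_subtype_coe)).sub
          (hΩ.comp measurable_subtype_coe))).2 (hM ρ h1 h2)).le
    rw [mul_zero, nonpos_iff_eq_zero] at h1 h2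
    refine ⟨u, ?_, ?_⟩
    · exact ((key _ _ (by fun_prop)).1 h1).trans (le_mul_of_one_le_left zero_le le_self_add)
    · exact ((key _ _ (by fun_prop)).1 h2).trans (le_mul_of_one_le_left zero_le le_self_add)
  · have hp : 1 ≤ s.toReal := by
      rw [← ENNReal.toReal_one]; exact ENNReal.toReal_mono hst hs
    have hp0 : 0 < s.toReal := one_pos.trans_le hp
    have hψ : Measurable fun t : ℝ => ‖t‖ₑ ^ s.toReal := by fun_prop
    obtain ⟨u, h1, h2⟩ := exists_lintegral_translation_le hn hΩ hhom hψ hy0 hy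
      (B := M ^ s.toReal) fun ρ h1 h2 => by
        have := hM ρ h1 h2
        rw [eLpNorm_eq_lintegral_rpow_enorm_toReal hs0 hst] at this
        rwa [one_div, ENNReal.rpow_inv_le_iff hp0] at this
    have key : ∀ g : En n → ℝ, ∫⁻ z in annulus n, ‖g z‖ₑ ^ s.toReal ≤
        2 * (rotationConst n * 2 ^ n) * M ^ s.toReal →
        eLpNorm g s (volume.restrict (annulus n)) ≤ translationConst n * M := by
      intro g hg
      rw [eLpNorm_eq_lintegral_rpow_enorm_toReal hs0 hst, one_div, ENNReal.rpow_inv_le_iff hp0,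
        ENNReal.mul_rpow_of_nonneg _ _ hp0.le]
      refine hg.trans ?_
      gcongr
      calc 2 * (rotationConst n * 2 ^ n) ≤ translationConst n := le_add_self
        _ = translationConst n ^ (1 : ℝ) := (ENNReal.rpow_one _).symm
        _ ≤ _ := ENNReal.rpow_le_rpow_of_exponent_le le_self_add hp
    exact ⟨u, key _ h1, key _ h2⟩

end Translation

section Kernel

variable {n : ℕ} {s : ℝ≥0∞} {Ω : En n → ℝ}

theorem eLpNorm_small_translation_le (hn : n ≠ 0) (hs : 1 ≤ s) (hΩ : Measurable Ω)
    (hhom : HomZero Ω) {y : En n} (hy0 : y ≠ 0) (hy : ‖y‖ < 1 / 16) {δ : ℝ}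
    (hδ : 128 * ‖y‖ < δ) :
    eLpNorm (fun z => Ω (z + y) - Ω z) s (volume.restrict (annulus n)) ≤
      2 * (translationConst n * emodCont s Ω δ) := by
  obtain ⟨u, h1, h2⟩ := exists_eLpNorm_translation_le hn hs hΩ hhom hy0 hy hδ
  have h : (fun z => Ω (z + y) - Ω z) =
      (fun z => Ω (z + u) - Ω z) - fun z => Ω (z + u) - Ω (z + y) := by
    ext z; simp
  rw [h, two_mul]
  refine (eLpNorm_sub_le ?_ ?_ hs).trans (add_le_add h1 h2)
  · exact Measurable.aestronglyMeasurable (by fun_prop)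
  · exact Measurable.aestronglyMeasurable (by fun_prop)

/-- The half-open annulus `R ≤ |z| < 2R`. -/
def shell (n : ℕ) (R : ℝ) : Set (En n) := {z | R ≤ ‖z‖ ∧ ‖z‖ < 2 * R}

theorem measurableSet_shell (n : ℕ) (R : ℝ) : MeasurableSet (shell n R) := by
  refine measurableSet_setOf_and (measurableSet_le ?_ ?_) (measurableSet_lt ?_ ?_) <;> fun_prop

theorem eLpNorm_translation_le (hn : n ≠ 0) (hs : 1 ≤ s) (hΩ : Measurable Ω)
    (hhom : HomZero Ω) {x : En n} (hx0 : x ≠ 0) (hx : ‖x‖ < 1 / 2) :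
    eLpNorm (fun z => Ω (z - x) - Ω z) s (volume.restrict (shell n 1)) ≤
      1024 * translationConst n * emodCont s Ω (‖x‖ / 2) := by
  set y : En n := (-1 / 512 : ℝ) • x with hy
  have hyn : ‖y‖ = ‖x‖ / 512 := by
    rw [hy, norm_smul, norm_div, norm_neg, norm_one, Real.norm_of_nonneg (by norm_num)]; ring
  have hxpos : 0 < ‖x‖ := norm_pos_iff.2 hx0
  have hy0 : y ≠ 0 := by rw [← norm_ne_zero_iff, hyn]; positivity
  have hstep := eLpNorm_small_translation_le hn hs hΩ hhom hy0 (by rw [hyn]; linarith)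
    (δ := ‖x‖ / 2) (by rw [hyn]; linarith)
  set g : ℕ → En n → ℝ := fun k z => Ω (z + ((k + 1 : ℕ) : ℝ) • y) - Ω (z + (k : ℝ) • y) with hg
  have hsum : (fun z => Ω (z - x) - Ω z) = ∑ k ∈ Finset.range 512, g k := by
    ext z
    rw [Finset.sum_apply, hg,
      Finset.sum_range_sub (fun k : ℕ => Ω (z + (k : ℝ) • y)) 512]
    have : ((512 : ℕ) : ℝ) • y = -x := by rw [hy, smul_smul]; norm_num
    rw [this, Nat.cast_zero, zero_smul, add_zero, sub_eq_add_neg z x]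
  have hpiece : ∀ k ∈ Finset.range 512, eLpNorm (g k) s (volume.restrict (shell n 1)) ≤
      2 * (translationConst n * emodCont s Ω (‖x‖ / 2)) := by
    intro k hk
    have hk' : (k : ℝ) ≤ 512 := by exact_mod_cast (Finset.mem_range.1 hk).le
    have hgk : g k = (fun z => Ω (z + y) - Ω z) ∘ fun z => z + (k : ℝ) • y := by
      ext z
      simp only [hg, Function.comp_apply]
      rw [add_assoc, Nat.cast_add, Nat.cast_one, add_smul, one_smul]
    have hsub : shell n 1 ⊆ (fun z => z + (k : ℝ) • y) ⁻¹' annulus n := by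
      rintro z ⟨h1, h2⟩
      have hky : ‖(k : ℝ) • y‖ ≤ ‖x‖ := by
        rw [norm_smul, hyn, Real.norm_of_nonneg (Nat.cast_nonneg k)]
        nlinarith
      have h3 := norm_add_le z ((k : ℝ) • y)
      have h4 : ‖z‖ ≤ ‖z + (k : ℝ) • y‖ + ‖(k : ℝ) • y‖ := by
        simpa using norm_sub_le (z + (k : ℝ) • y) ((k : ℝ) • y)
      constructor <;> linarith
    calc eLpNorm (g k) s (volume.restrict (shell n 1))
        ≤ eLpNorm (g k) s (volume.restrict ((fun z => z + (k : ℝ) • y) ⁻¹' annulus n)) :=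
          eLpNorm_mono_measure _ (restrict_mono hsub le_rfl)
      _ = eLpNorm (fun z => Ω (z + y) - Ω z) s (volume.restrict (annulus n)) := by
          rw [hgk]
          exact eLpNorm_comp_measurePreserving (Measurable.aestronglyMeasurable (by fun_prop))
            ((measurePreserving_add_right volume _).restrict_preimage (measurableSet_annulus n))
      _ ≤ _ := hstep
  rw [hsum]
  refine (eLpNorm_sum_le (fun k _ => Measurable.aestronglyMeasurable (by fun_prop)) hs).trans ?_
  refine (Finset.sum_le_sum hpiece).trans_eq ?_
  rw [Finset.sum_const, Finset.card_range, nsmul_eq_mul]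
  push_cast
  ring

theorem eLpNorm_shell_ne_top (hn : n ≠ 0) (hΩ : Measurable Ω) (hhom : HomZero Ω)
    (h : sphereLpNorm s Ω ≠ ⊤) : eLpNorm Ω s (volume.restrict (shell n 1)) ≠ ⊤ := by
  have hN : Measurable fun z : En n => ‖z‖⁻¹ • z := by fun_prop
  have hle : map (fun z : En n => ‖z‖⁻¹ • z) (volume.restrict (shell n 1)) ≤
      ENNReal.ofReal (2 ^ n) • map Subtype.val (sphereMeasure n) := by
    refine le_iff.2 fun S hS => ?_
    rw [map_apply hN hS, restrict_apply (hN hS), Measure.smul_apply, smul_eq_mul,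
      map_apply measurable_subtype_coe hS, inter_comm]
    refine map_normalize_le hn two_pos (fun z hz => ⟨?_, by simpa using hz.2⟩) hS
    rintro rfl
    have := hz.1
    norm_num at this
  have hmem : MemLp Ω s (map Subtype.val (sphereMeasure n)) :=
    ⟨hΩ.aestronglyMeasurable, by
      rw [eLpNorm_map_measure hΩ.aestronglyMeasurable measurable_subtype_coe.aemeasurable]
      exact h.lt_top⟩
  have h2 := (hmem.of_measure_le_smul ENNReal.ofReal_ne_top hle).2
  rw [eLpNorm_map_measure hΩ.aestronglyMeasurable hN.aemeasurable] at h2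
  refine (lt_of_eq_of_lt (eLpNorm_congr_ae ?_) h2).ne
  filter_upwards [ae_restrict_mem (measurableSet_shell n 1)] with z hz
  have hz0 : 0 < ‖z‖ := one_pos.trans_le hz.1
  exact (hhom _ (inv_pos.2 hz0) z (norm_pos_iff.1 hz0)).symm

theorem abs_rpow_sub_rpow_le {β : ℝ} (hβ : β ≤ 0) {a b : ℝ} (ha : 1 / 2 ≤ a) (hb : 1 / 2 ≤ b) :
    |a ^ β - b ^ β| ≤ |β| * (1 / 2) ^ (β - 1) * |a - b| := by
  refine Convex.norm_image_sub_le_of_norm_hasDerivWithin_le (s := Ici (1 / 2 : ℝ))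
    (f := fun t : ℝ => t ^ β) (f' := fun t => β * t ^ (β - 1)) (fun t ht => ?_) (fun t ht => ?_)
    (convex_Ici _) hb ha
  · have : t ≠ 0 := ((by norm_num : (0 : ℝ) < 1 / 2).trans_le ht).ne'
    exact (Real.hasDerivAt_rpow_const (Or.inl this)).hasDerivWithinAt
  · have ht0 : (0 : ℝ) < t := (by norm_num : (0 : ℝ) < 1 / 2).trans_le ht
    rw [norm_mul, Real.norm_eq_abs, Real.norm_of_nonneg (Real.rpow_nonneg ht0.le _)]
    exact mul_le_mul_of_nonneg_left
      (Real.rpow_le_rpow_of_nonpos (by norm_num) ht (by linarith)) (abs_nonneg β)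

/-- The difference of a homogeneous kernel and its translate. -/
def kernelDiff (Ω : En n → ℝ) (β : ℝ) (x z : En n) : ℝ :=
  Ω (z - x) * ‖z - x‖ ^ β - Ω z * ‖z‖ ^ β

theorem eLpNorm_kernelDiff_le (hn : n ≠ 0) (hs : 1 ≤ s) (hΩ : Measurable Ω) (hhom : HomZero Ω)
    {β : ℝ} (hβ : β ≤ 0) {x : En n} (hx0 : x ≠ 0) (hx : ‖x‖ < 1 / 2) :
    eLpNorm (kernelDiff Ω β x) s (volume.restrict (shell n 1)) ≤
      ENNReal.ofReal ((1 / 2) ^ β) *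
          (1024 * translationConst n * emodCont s Ω (‖x‖ / 2)) +
        ENNReal.ofReal (|β| * (1 / 2) ^ (β - 1) * ‖x‖) *
          eLpNorm Ω s (volume.restrict (shell n 1)) := by
  have h : kernelDiff Ω β x = (fun z => (Ω (z - x) - Ω z) * ‖z - x‖ ^ β) +
      fun z => Ω z * (‖z - x‖ ^ β - ‖z‖ ^ β) := by
    ext z; simp only [kernelDiff, Pi.add_apply]; ring
  have hge : ∀ z ∈ shell n 1, 1 / 2 ≤ ‖z - x‖ := by
    rintro z ⟨hz, -⟩
    have := norm_sub_norm_le z x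
    linarith
  rw [h]
  refine (eLpNorm_add_le (Measurable.aestronglyMeasurable (by fun_prop))
    (Measurable.aestronglyMeasurable (by fun_prop)) hs).trans (add_le_add ?_ ?_)
  · refine (eLpNorm_le_mul_eLpNorm_of_ae_le_mul (g := fun z => Ω (z - x) - Ω z) ?_ s).trans
      (mul_le_mul' le_rfl (eLpNorm_translation_le hn hs hΩ hhom hx0 hx))
    filter_upwards [ae_restrict_mem (measurableSet_shell n 1)] with z hz
    rw [norm_mul, mul_comm, Real.norm_of_nonneg (Real.rpow_nonneg (norm_nonneg _) _)]
    exact mul_le_mul_of_nonneg_right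
      (Real.rpow_le_rpow_of_nonpos (by norm_num) (hge z hz) hβ) (norm_nonneg _)
  · refine eLpNorm_le_mul_eLpNorm_of_ae_le_mul ?_ s
    filter_upwards [ae_restrict_mem (measurableSet_shell n 1)] with z hz
    rw [norm_mul, mul_comm]
    gcongr
    refine (abs_rpow_sub_rpow_le hβ (hge z hz) (le_trans (by norm_num) hz.1)).trans ?_
    gcongr
    simpa using abs_norm_sub_norm_le (z - x) z

theorem eLpNorm_kernelDiff_scale (hΩ : Measurable Ω) (hhom : HomZero Ω) (β : ℝ) {R : ℝ}
    (hR : 0 < R) {x : En n} (hx : ‖x‖ < R) :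
    eLpNorm (kernelDiff Ω β x) s (volume.restrict (shell n R)) =
      ENNReal.ofReal (R ^ (n * (s⁻¹).toReal + β)) *
        eLpNorm (kernelDiff Ω β (R⁻¹ • x)) s (volume.restrict (shell n 1)) := by
  have hm : Measurable fun z : En n => R • z := by fun_prop
  have hpre : (fun z : En n => R • z) ⁻¹' shell n R = shell n 1 := by
    ext z
    simp only [shell, mem_preimage, mem_ofPred_eq, norm_smul, Real.norm_of_nonneg hR.le]
    refine and_congr ⟨fun h => ?_, fun h => ?_⟩ ⟨fun h => ?_, fun h => ?_⟩ <;> nlinarith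
  have hRn : (0 : ℝ) < R ^ n := by positivity
  have hvol : volume.restrict (shell n R) =
      ENNReal.ofReal (R ^ n) • map (fun z : En n => R • z) (volume.restrict (shell n 1)) := by
    rw [← hpre, ← restrict_map hm (measurableSet_shell n R), map_addHaar_smul _ hR.ne',
      finrank_euclideanSpace_fin, restrict_smul, smul_smul, abs_of_pos (by positivity),
      ← ENNReal.ofReal_mul hRn.le, mul_inv_cancel₀ hRn.ne', ENNReal.ofReal_one, one_smul]
  have hK : Measurable (kernelDiff Ω β x) := by unfold kernelDiff; fun_prop
  rw [hvol, eLpNorm_smul_measure_of_ne_zero (by simpa using hRn),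
    eLpNorm_map_measure hK.aestronglyMeasurable hm.aemeasurable]
  have hcomp : eLpNorm (kernelDiff Ω β x ∘ fun z => R • z) s (volume.restrict (shell n 1)) =
      eLpNorm ((R ^ β) • kernelDiff Ω β (R⁻¹ • x)) s (volume.restrict (shell n 1)) := by
    refine eLpNorm_congr_ae ?_
    filter_upwards [ae_restrict_mem (measurableSet_shell n 1)] with z hz
    have hz0 : z ≠ 0 := norm_pos_iff.1 (one_pos.trans_le hz.1)
    have hzx : z - R⁻¹ • x ≠ 0 := by
      rw [sub_ne_zero]
      rintro rfl
      have := hz.1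
      rw [norm_smul, norm_inv, Real.norm_of_nonneg hR.le, inv_mul_eq_div, le_div_iff₀ hR] at this
      linarith
    have hsub : R • z - x = R • (z - R⁻¹ • x) := by
      rw [smul_sub, smul_inv_smul₀ hR.ne']
    simp only [kernelDiff, Function.comp_apply, Pi.smul_apply, smul_eq_mul]
    rw [hsub, hhom R hR _ hzx, hhom R hR _ hz0, norm_smul, norm_smul, Real.norm_of_nonneg hR.le,
      Real.mul_rpow hR.le (norm_nonneg _), Real.mul_rpow hR.le (norm_nonneg _)]
    ring
  rw [hcomp, eLpNorm_const_smul, smul_eq_mul, ← mul_assoc, one_div,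
    Real.enorm_of_nonneg (Real.rpow_nonneg hR.le _), ENNReal.ofReal_rpow_of_pos hRn,
    ← ENNReal.ofReal_mul (by positivity), Real.rpow_add hR, ← Real.rpow_natCast,
    ← Real.rpow_mul hR.le]

theorem modCont_le_integral (hs : 1 ≤ s) (hΩ : Measurable Ω) (hD : DiniCond s 0 Ω) {a : ℝ}
    (ha : 0 < a) (ha1 : 2 * a < 1) :
    modCont s Ω a ≤ 2 * ∫ δ in a..(2 * a), modCont s Ω δ / δ := by
  have hmono := modCont_mono hs hΩ hD.2.1
  have hint : IntervalIntegrable (fun δ => modCont s Ω δ / δ) volume a (2 * a) := by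
    rw [intervalIntegrable_iff_integrableOn_Icc_of_le (by linarith)]
    have := hD.2.2
    simp only [add_zero, Real.rpow_one] at this
    exact this.mono_set (Icc_subset_Ioo ha ha1)
  have h := intervalIntegral.integral_mono_on (f := fun _ => modCont s Ω a / (2 * a))
    (by linarith) intervalIntegrable_const hint fun δ hδ => by
      have h1 : 0 < δ := ha.trans_le hδ.1
      exact div_le_div₀ ENNReal.toReal_nonneg (hmono hδ.1) h1 hδ.2
  rw [intervalIntegral.integral_const, smul_eq_mul] at h
  have h2 : (2 * a - a) * (modCont s Ω a / (2 * a)) = modCont s Ω a / 2 := by field_simp; ring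
  linarith

end Kernel

/-- (Ding–Lu kernel smoothness estimate on annuli `R ≤ |z| < 2R`.) -/
theorem kernel_difference_annulus_estimate {n : ℕ} (hn : 2 ≤ n)
    (α : ℝ) (hα0 : 0 < α) (hαn : α < n)
    (s : ℝ≥0∞) (hs1 : 1 < s)
    (Ω : En n → ℝ) (hΩm : Measurable Ω) (hD : DiniCond s 0 Ω) :
    ∃ C > 0, ∃ ϑ : ℝ, ϑ ∈ Ioo (0 : ℝ) (1 / 2) ∧
      ∀ (R : ℝ), 0 < R → ∀ x : En n, ‖x‖ < ϑ * R →
        (eLpNorm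
            (fun z : En n =>
              Ω (z - x) * ‖z - x‖ ^ (α - (n : ℝ)) - Ω z * ‖z‖ ^ (α - (n : ℝ))) s
            (volume.restrict {z : En n | R ≤ ‖z‖ ∧ ‖z‖ < 2 * R})).toReal
        ≤ C * R ^ ((n : ℝ) * (s⁻¹).toReal - ((n : ℝ) - α)) *
            (‖x‖ / R + ∫ δ in (‖x‖ / (2 * R))..(‖x‖ / R), modCont s Ω δ / δ) := by
  have hn0 : n ≠ 0 := by omega
  obtain ⟨hhom, hLs, -⟩ := id hD
  set β : ℝ := α - n with hβ
  have hβ0 : β ≤ 0 := by linarith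
  set E := eLpNorm Ω s (volume.restrict (shell n 1)) with hE
  have hEt : E ≠ ⊤ := eLpNorm_shell_ne_top hn0 hΩm hhom hLs
  have hKt := translationConst_ne_top hn0
  set K := translationConst n with hK
  set C₁ : ℝ := (1 / 2) ^ β * (1024 * K.toReal) * 2 with hC₁
  set C₂ : ℝ := |β| * (1 / 2) ^ (β - 1) * E.toReal with hC₂
  have hC₁0 : 0 ≤ C₁ := by positivity
  have hC₂0 : 0 ≤ C₂ := by positivity
  refine ⟨C₁ + C₂ + 1, by positivity, 1 / 4, by constructor <;> norm_num, fun R hR x hx => ?_⟩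
  change (eLpNorm (kernelDiff Ω β x) s (volume.restrict (shell n R))).toReal ≤ _
  rcases eq_or_ne x 0 with rfl | hx0
  · have : kernelDiff Ω β (0 : En n) = 0 := by ext z; simp [kernelDiff]
    simp [this]
  have hxR : ‖R⁻¹ • x‖ = ‖x‖ / R := by
    rw [norm_smul, norm_inv, Real.norm_of_nonneg hR.le, inv_mul_eq_div]
  set t := ‖x‖ / R with ht
  have ht0 : 0 < t := div_pos (norm_pos_iff.2 hx0) hR
  have ht1 : t < 1 / 4 := by rw [ht, div_lt_iff₀ hR]; exact hx
  have hx2 : ‖x‖ / (2 * R) = t / 2 := by rw [ht]; field_simp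
  have hI := modCont_le_integral hs1.le hΩm hD (half_pos ht0) (by linarith)
  rw [mul_div_cancel₀ t two_ne_zero] at hI
  rw [hx2]
  set I := ∫ δ in (t / 2)..t, modCont s Ω δ / δ with hIdef
  have hker := eLpNorm_kernelDiff_le hn0 hs1.le hΩm hhom hβ0 (x := R⁻¹ • x)
    (smul_ne_zero (inv_ne_zero hR.ne') hx0) (by rw [hxR]; linarith)
  rw [hxR] at hker
  have hMt := emodCont_ne_top hs1.le hΩm hLs (t / 2)
  have hreal := ENNReal.toReal_mono (by finiteness) hker
  rw [ENNReal.toReal_add (by finiteness) (by finiteness), ENNReal.toReal_mul, ENNReal.toReal_mul,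
    ENNReal.toReal_mul, ENNReal.toReal_mul, ENNReal.toReal_ofReal (by positivity),
    ENNReal.toReal_ofReal (by positivity), ENNReal.toReal_ofNat] at hreal
  change _ ≤ _ * (_ * modCont s Ω (t / 2)) + _ at hreal
  have hI0 : 0 ≤ I := by
    have : 0 ≤ modCont s Ω (t / 2) := ENNReal.toReal_nonneg
    linarith
  rw [eLpNorm_kernelDiff_scale hΩm hhom β hR (by linarith), ENNReal.toReal_mul,
    ENNReal.toReal_ofReal (by positivity)]
  have hexp : (n : ℝ) * (s⁻¹).toReal - (n - α) = n * (s⁻¹).toReal + β := by rw [hβ]; ring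
  rw [hexp, mul_comm (C₁ + C₂ + 1), mul_assoc]
  refine mul_le_mul_of_nonneg_left (hreal.trans ?_) (by positivity)
  calc (1 / 2) ^ β * (1024 * K.toReal * modCont s Ω (t / 2)) +
        |β| * (1 / 2) ^ (β - 1) * t * E.toReal
      ≤ (1 / 2) ^ β * (1024 * K.toReal * (2 * I)) + |β| * (1 / 2) ^ (β - 1) * t * E.toReal := by
        gcongr
    _ = C₁ * I + C₂ * t := by rw [hC₁, hC₂]; ring
    _ ≤ (C₁ + C₂ + 1) * (t + I) := by nlinarith [mul_nonneg hC₁0 ht0.le, mul_nonneg hC₂0 hI0]
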